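/- Let (K,M) be a coherent cellular category. Suppose f: A → B and g: A → C are morphisms in M, u: B → D and v: C → D are morphisms in M with u ∘ f = v ∘ g, and m: D → E is a morphism in M. Then the square (f, g, u, v) is cellular if and only if the square (f, g, m ∘ u, m ∘ v) is cellular. (In other words, cellular squares form an independence notion on the subcategory K_M of morphisms in M.) -/

import Mathlib

open CategoryTheory CategoryTheory.Limits

universe v u

namespace Paper

/-- A preorder `I` is `κ`-directed if every subset of cardinality `< κ` has an upper bound. -/
def IsCardinalDirected (κ : Cardinal.{v}) (I : Type v) [Preorder I] : Prop :=
  ∀ S : Set I, Cardinal.mk S < κ → ∃ j : I, ∀ i ∈ S, i ≤ j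

section Cellular

variable {K : Type u} [Category.{v} K]

/-- The canonical cocone, with apex `F.obj j`, over the restriction of a chain `F` to `Set.Iio j`. -/
@[simps]
def chainCocone {J : Type v} [Preorder J] (F : J ⥤ K) (j : J) :
    Cocone ((Monotone.functor (f := (Subtype.val : Set.Iio j → J)) fun _ _ h => h) ⋙ F) where
  pt := F.obj j
  ι :=
    { app := fun i => F.map (homOfLE i.2.le)
      naturality := fun i i' h => by
        dsimp [Monotone.functor]
        rw [Category.comp_id, ← F.map_comp]
        rfl }

variable [HasColimits K]

/-- `M` is closed under transfinite compositions: for every smooth chain indexed by a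
well-ordered set, all of whose successor maps lie in `M`, the canonical morphism from the
first object to the colimit lies in `M`. -/
def TransfiniteClosed (M : MorphismProperty K) : Prop :=
  ∀ (J : Type v) (_ : LinearOrder J) (_ : OrderBot J) (_ : SuccOrder J) (_ : WellFoundedLT J)
    (F : J ⥤ K),
    (∀ j : J, Order.IsSuccLimit j → Nonempty (IsColimit (chainCocone F j))) →
    (∀ j : J, ¬IsMax j → M (F.map (homOfLE (Order.le_succ j)))) →
    ∀ c : Cocone F, IsColimit c → M (c.ι.app ⊥)

/-- A cellular category: a cocomplete category equipped with a class of morphisms containing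
all isomorphisms and closed under pushouts and transfinite compositions. -/
class CellularCategory (K : Type u) [Category.{v} K] [HasColimits K]
    (M : MorphismProperty K) : Prop where
  iso_mem : ∀ {X Y : K} (f : X ⟶ Y), IsIso f → M f
  comp_mem : ∀ {X Y Z : K} (f : X ⟶ Y) (g : Y ⟶ Z), M f → M g → M (f ≫ g)
  pushout_mem : ∀ {A B A' P : K} (f : A ⟶ B) (g : A ⟶ A') (u : B ⟶ P) (v : A' ⟶ P),
    IsPushout f g u v → M f → M v
  transfinite_mem : TransfiniteClosed M

/-- A commutative square `(f, g, u, v)` is cellular if the induced morphism from the pushout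
of the span `(f, g)` to the lower right corner lies in `M`. -/
def IsCellularSquare (M : MorphismProperty K) {A B C D : K}
    (f : A ⟶ B) (g : A ⟶ C) (u : B ⟶ D) (v : C ⟶ D) : Prop :=
  ∃ w : f ≫ u = g ≫ v, M (pushout.desc u v w)

/-- A morphism of the arrow category is a cellular square (all four morphisms in `M` and
the induced morphism from the pushout in `M`). -/
def CellularHom (M : MorphismProperty K) : ∀ ⦃X Y : Arrow K⦄, (X ⟶ Y) → Prop :=
  fun X Y sq => M sq.left ∧ M sq.right ∧ IsCellularSquare M sq.left X.hom Y.hom sq.right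

/-- `(K, M)` is coherent. -/
def Coherent (M : MorphismProperty K) : Prop :=
  ∀ {X Y Z : K} (f : X ⟶ Y) (g : Y ⟶ Z), M (f ≫ g) → M g → M f


/-- `(K, M)` has effective unions: pullbacks of cospans in `M` exist with projections in `M`,
and every pullback square of morphisms of `M` is a cellular square. -/
def EffectiveUnions (M : MorphismProperty K) : Prop :=
  (∀ {B C D : K} (u : B ⟶ D) (v : C ⟶ D), M u → M v →
    ∃ (A : K) (f : A ⟶ B) (g : A ⟶ C), M f ∧ M g ∧ IsPullback f g u v) ∧
  ∀ {A B C D : K} (f : A ⟶ B) (g : A ⟶ C) (u : B ⟶ D) (v : C ⟶ D),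
    M f → M g → M u → M v → IsPullback f g u v → IsCellularSquare M f g u v

end Cellular

section Retract

variable {K : Type u} [Category.{v} K]

/-- `f` is a retract of `f'` in the arrow category. -/
def IsArrowRetract {A B A' B' : K} (f : A ⟶ B) (f' : A' ⟶ B') : Prop :=
  ∃ (iA : A ⟶ A') (iB : B ⟶ B') (rA : A' ⟶ A) (rB : B' ⟶ B),
    iA ≫ rA = 𝟙 A ∧ iB ≫ rB = 𝟙 B ∧ iA ≫ f' = f ≫ iB ∧ rA ≫ f = f' ≫ rB

/-- `M` is closed under retracts in the arrow category. -/
def RetractClosed (M : MorphismProperty K) : Prop :=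
  ∀ {A B A' B' : K} (f : A ⟶ B) (f' : A' ⟶ B'), IsArrowRetract f f' → M f' → M f

end Retract

section Sub

variable {C : Type u} [Category.{v} C]
variable (Obj : C → Prop) (Hom : ∀ ⦃X Y : C⦄, (X ⟶ Y) → Prop)

/-- `F` is a diagram lying in the (not necessarily full) subcategory determined by
the object predicate `Obj` and the morphism predicate `Hom`. -/
def SubDiagram {I : Type*} [Preorder I] (F : I ⥤ C) : Prop :=
  (∀ i, Obj (F.obj i)) ∧ ∀ (i j : I) (h : i ⟶ j), Hom (F.map h)

/-- `c` is a colimit cocone for `F` in the subcategory determined by `Obj` and `Hom`: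
its apex and legs lie in the subcategory, and it enjoys the universal property with
respect to all cocones lying in the subcategory. -/
def SubIsColimit {I : Type*} [Preorder I] {F : I ⥤ C} (c : Cocone F) : Prop :=
  Obj c.pt ∧ (∀ i, Hom (c.ι.app i)) ∧
    ∀ c' : Cocone F, Obj c'.pt → (∀ i, Hom (c'.ι.app i)) →
      ∃ m : c.pt ⟶ c'.pt, Hom m ∧ (∀ i, c.ι.app i ≫ m = c'.ι.app i) ∧
        ∀ m' : c.pt ⟶ c'.pt, Hom m' → (∀ i, c.ι.app i ≫ m' = c'.ι.app i) → m' = m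

/-- `X` is a `κ`-presentable object of the subcategory determined by `Obj` and `Hom`. -/
def SubPresentable (κ : Cardinal.{v}) (X : C) : Prop :=
  ∀ I : Preord.{v}, IsCardinalDirected κ I →
    ∀ F : I ⥤ C, SubDiagram Obj Hom F → ∀ c : Cocone F, SubIsColimit Obj Hom c →
      (∀ h : X ⟶ c.pt, Hom h → ∃ (i : I) (g : X ⟶ F.obj i), Hom g ∧ g ≫ c.ι.app i = h) ∧
      (∀ (i : I) (g g' : X ⟶ F.obj i), Hom g → Hom g' → g ≫ c.ι.app i = g' ≫ c.ι.app i →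
        ∃ (j : I) (hij : i ≤ j), g ≫ F.map hij.hom = g' ≫ F.map hij.hom)

/-- The subcategory determined by `Obj` and `Hom` has `κ`-directed colimits. -/
def SubHasDirectedColimits (κ : Cardinal.{v}) : Prop :=
  ∀ I : Preord.{v}, IsCardinalDirected κ I →
    ∀ F : I ⥤ C, SubDiagram Obj Hom F → ∃ c : Cocone F, SubIsColimit Obj Hom c

/-- The subcategory determined by `Obj` and `Hom` is a `κ`-accessible category:
it has `κ`-directed colimits and every object is a `κ`-directed colimit of
`κ`-presentable objects of the subcategory. -/
def SubAccessible (κ : Cardinal.{v}) : Prop :=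
  SubHasDirectedColimits Obj Hom κ ∧
    ∀ X : C, Obj X → ∃ (I : Preord.{v}) (F : I ⥤ C) (c : Cocone F),
      IsCardinalDirected κ I ∧ SubDiagram Obj Hom F ∧
      (∀ i, SubPresentable Obj Hom κ (F.obj i)) ∧ SubIsColimit Obj Hom c ∧ c.pt = X

/-- The subcategory determined by `Obj` and `Hom` is closed under `κ`-directed colimits in `C`. -/
def SubClosed (κ : Cardinal.{v}) : Prop :=
  ∀ I : Preord.{v}, IsCardinalDirected κ I →
    ∀ F : I ⥤ C, SubDiagram Obj Hom F →
      ∀ c : Cocone F, IsColimit c → SubIsColimit Obj Hom c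

end Sub

section Access

variable (K : Type u) [Category.{v} K]

/-- `K` is a `κ`-accessible category. -/
def AccessibleCat (κ : Cardinal.{v}) : Prop :=
  SubAccessible (fun _ : K => True) (fun _ _ _ => True) κ

/-- `A` is a `κ`-presentable object of `K`. -/
def PresentableObj (κ : Cardinal.{v}) (A : K) : Prop :=
  SubPresentable (fun _ : K => True) (fun _ _ _ => True) κ A

variable {K}
variable (M : MorphismProperty K)

/-- `(K, M)` is `κ`-continuous: the wide subcategory `K_M` is closed under `κ`-directed
colimits in `K`. -/
def MContinuous (κ : Cardinal.{v}) : Prop :=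
  SubClosed (fun _ : K => True) M κ

/-- `(K, M)` is a `κ`-accessible cellular category: it is `κ`-continuous and both `K` and the
wide subcategory `K_M` are `κ`-accessible. -/
def MAccessible (κ : Cardinal.{v}) : Prop :=
  MContinuous M κ ∧ AccessibleCat K κ ∧ SubAccessible (fun _ : K => True) M κ

/-- The morphisms of `M` with `κ`-presentable domain and codomain. -/
def MBetweenPresentable (κ : Cardinal.{v}) : MorphismProperty K :=
  fun A B f => M f ∧ PresentableObj K κ A ∧ PresentableObj K κ B

end Access

section Cof

variable {K : Type u} [Category.{v} K]

/-- The closure of a class of morphisms under pushouts, transfinite compositions and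
retracts. -/
inductive CofClosure (X : MorphismProperty K) : ∀ {A B : K}, (A ⟶ B) → Prop
  | of {A B : K} (f : A ⟶ B) : X f → CofClosure X f
  | pushout {A B A' P : K} (f : A ⟶ B) (g : A ⟶ A') (u : B ⟶ P) (v : A' ⟶ P) :
      IsPushout f g u v → CofClosure X f → CofClosure X v
  | retract {A B A' B' : K} (f : A ⟶ B) (f' : A' ⟶ B') :
      IsArrowRetract f f' → CofClosure X f' → CofClosure X f
  | transfinite (J : Type v) (_ : LinearOrder J) (_ : OrderBot J) (_ : SuccOrder J)
      (_ : WellFoundedLT J) (F : J ⥤ K) :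
      (∀ j : J, Order.IsSuccLimit j → Nonempty (IsColimit (chainCocone F j))) →
      (∀ j : J, ¬IsMax j → CofClosure X (F.map (homOfLE (Order.le_succ j)))) →
      ∀ c : Cocone F, IsColimit c → CofClosure X (c.ι.app ⊥)

/-- The morphism property generated by a family of morphisms. -/
inductive OfFamily {ι : Type v} {A B : ι → K} (x : ∀ i, A i ⟶ B i) : ∀ {X Y : K}, (X ⟶ Y) → Prop
  | mk (i : ι) : OfFamily x (x i)

variable [HasColimits K]

/-- `(K, M)` is cofibrantly generated: `M` is the closure of a set of morphisms under
pushouts, transfinite compositions and retracts. -/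
def CofibrantlyGenerated (M : MorphismProperty K) : Prop :=
  ∃ (ι : Type v) (A B : ι → K) (x : ∀ i, A i ⟶ B i),
    ∀ {X Y : K} (f : X ⟶ Y), M f ↔ CofClosure (fun _ _ g => OfFamily x g) f

end Cof


section CellularSquare

variable {K : Type u} [Category.{v} K]

lemma pushout_desc_comp {A B C D E : K} {f : A ⟶ B} {g : A ⟶ C} [HasPushout f g]
    (u : B ⟶ D) (v : C ⟶ D) (w : f ≫ u = g ≫ v) (m : D ⟶ E) :
    pushout.desc u v w ≫ m = pushout.desc (u ≫ m) (v ≫ m) (by rw [reassoc_of% w]) := by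
  ext <;> simp only [pushout.inl_desc_assoc, pushout.inl_desc, pushout.inr_desc_assoc,
    pushout.inr_desc]

lemma Coherent.hasOfPostcompProperty {M : MorphismProperty K} (hcoh : Coherent M) :
    M.HasOfPostcompProperty M where
  of_postcomp f g hg hfg := hcoh f g hfg hg

variable [HasColimits K]

instance (M : MorphismProperty K) [CellularCategory K M] : M.IsStableUnderComposition where
  comp_mem := CellularCategory.comp_mem

lemma isCellularSquare_iff {M : MorphismProperty K} {A B C D : K} {f : A ⟶ B} {g : A ⟶ C}
    {u : B ⟶ D} {v : C ⟶ D} (w : f ≫ u = g ≫ v) :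
    IsCellularSquare M f g u v ↔ M (pushout.desc u v w) :=
  exists_prop_of_true w

theorem cellularSquares_form_independence_notion_general {M W : MorphismProperty K}
    [M.RespectsRight W] [M.HasOfPostcompProperty W] {A B C D E : K}
    {f : A ⟶ B} {g : A ⟶ C} {u : B ⟶ D} {v : C ⟶ D} {m : D ⟶ E} (hm : W m)
    (w : f ≫ u = g ≫ v) :
    IsCellularSquare M f g u v ↔ IsCellularSquare M f g (u ≫ m) (v ≫ m) := by
  have w' : f ≫ u ≫ m = g ≫ v ≫ m := by rw [reassoc_of% w]
  rw [isCellularSquare_iff w, isCellularSquare_iff w', ← pushout_desc_comp u v w m,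
    M.postcomp_iff _ m hm]

end CellularSquare

/-- In a coherent cellular category, for a commutative square of morphisms of `M`
and a morphism `m : D ⟶ E` of `M`, the square `(f, g, u, v)` is cellular if and only if the
square `(f, g, u ≫ m, v ≫ m)` is cellular. -/
theorem cellularSquares_form_independence_notion
    {K : Type u} [Category.{v} K] [HasColimits K] (M : MorphismProperty K)
    [CellularCategory K M] (hcoh : Coherent M)
    {A B C D E : K} (f : A ⟶ B) (g : A ⟶ C) (u : B ⟶ D) (v : C ⟶ D) (m : D ⟶ E)
    (hf : M f) (hg : M g) (hu : M u) (hv : M v) (hm : M m)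
    (w : f ≫ u = g ≫ v) :
    IsCellularSquare M f g u v ↔ IsCellularSquare M f g (u ≫ m) (v ≫ m) := by
  have := hcoh.hasOfPostcompProperty
  exact cellularSquares_form_independence_notion_general hm w

end Paper
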